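/- For every finite set Ω with |Ω| ≥ 3 and every t ∈ [1/2, 1), there exist a probability measure μ on Ω and sets A, B, C ⊆ Ω with μ(A) > 0, μ(B) > 0, μ(A∪B) > 0, together with sets S_A, S_B, S_{A∪B} ⊆ Ω such that S_A is the ⊆-least (μ_A, t)-stable set, S_B is the ⊆-least (μ_B, t)-stable set, S_{A∪B} is the ⊆-least (μ_{A∪B}, t)-stable set, S_A ⊆ C and S_B ⊆ C, but S_{A∪B} is not a subset of C (failure of the Or rule for probabilistically stable revision). -/

import Mathlib

open Finset

variable {Ω : Type*}

/-- The measure of a finite set of states given weights `w`: `μ(A) = ∑_{ω ∈ A} w ω`. -/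
noncomputable def mea (w : Ω → ℝ) (A : Finset Ω) : ℝ := ∑ ω ∈ A, w ω

/-- `w` is a probability weight function: nonnegative and summing to 1. -/
def IsProbWeight [Fintype Ω] (w : Ω → ℝ) : Prop :=
  (∀ ω, 0 ≤ w ω) ∧ (∑ ω, w ω) = 1

/-- The measure is regular: only the empty set has measure 0. -/
def RegularW (w : Ω → ℝ) : Prop := ∀ X : Finset Ω, mea w X = 0 → X = ∅

/-- Conditional measure `μ_A(X) = μ(A ∩ X) / μ(A)`. -/
noncomputable def condMea [DecidableEq Ω] (w : Ω → ℝ) (A X : Finset Ω) : ℝ := mea w (A ∩ X) / mea w A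

/-- `X` is `(m,t)`-stable for a set function `m`: `X` is nonempty and for every `E` with
`X ∩ E ≠ ∅` and `m E > 0`, `m (X ∩ E) / m E > t`. -/
def StableFor [DecidableEq Ω] (m : Finset Ω → ℝ) (t : ℝ) (X : Finset Ω) : Prop :=
  X.Nonempty ∧ ∀ E : Finset Ω, (X ∩ E).Nonempty → 0 < m E → t < m (X ∩ E) / m E

/-- `S` is the `⊆`-least `(m,t)`-stable set. -/
def IsLeastStable [DecidableEq Ω] (m : Finset Ω → ℝ) (t : ℝ) (S : Finset Ω) : Prop :=
  StableFor m t S ∧ ∀ X : Finset Ω, StableFor m t X → S ⊆ X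

/-- `w` represents the selection function `σ` for threshold `t`. -/
def RepresentsAt [DecidableEq Ω] (w : Ω → ℝ) (t : ℝ) (σ : Finset Ω → Finset Ω) : Prop :=
  ∀ E : Finset Ω, (0 < mea w E → IsLeastStable (condMea w E) t (σ E)) ∧
    (mea w E = 0 → σ E = ∅)

/-- Selection axiom (S1): `σ(X) = ∅` only if `X = ∅`. -/
def SelA1 (σ : Finset Ω → Finset Ω) : Prop := ∀ X : Finset Ω, σ X = ∅ → X = ∅

/-- Selection axiom (S2): `σ(X) ⊆ X`. -/
def SelA2 (σ : Finset Ω → Finset Ω) : Prop := ∀ X : Finset Ω, σ X ⊆ X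

/-- Selection axiom (S3): if `σ(A) ∩ B ≠ ∅` then `σ(A ∩ B) ⊆ σ(A) ∩ B`. -/
def SelA3 [DecidableEq Ω] (σ : Finset Ω → Finset Ω) : Prop :=
  ∀ A B : Finset Ω, (σ A ∩ B).Nonempty → σ (A ∩ B) ⊆ σ A ∩ B

/-- Selection axiom (S4ₙ) for every `n`: if `σ(A ∪ Xᵢ) = Xᵢ` for all `i`, then
`σ(A ∪ ⋃ᵢ Xᵢ) ⊆ ⋃ᵢ Xᵢ`. -/
def SelA4 [DecidableEq Ω] (σ : Finset Ω → Finset Ω) : Prop :=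
  ∀ n : ℕ, ∀ A : Finset Ω, ∀ X : Fin (n + 1) → Finset Ω,
    (∀ i, σ (A ∪ X i) = X i) →
    σ (A ∪ univ.biUnion X) ⊆ univ.biUnion X

/-- `ω ≻_σ X` iff `ω ∉ X` and `σ (X ∪ {ω}) = {ω}`. -/
def succS [DecidableEq Ω] (σ : Finset Ω → Finset Ω) (ω : Ω) (X : Finset Ω) : Prop :=
  ω ∉ X ∧ σ (X ∪ {ω}) = {ω}

/-- `X ⪰_σ ω` iff `ω ∈ X` or `σ (X ∪ {ω}) ≠ {ω}`. -/
def succeqS [DecidableEq Ω] (σ : Finset Ω → Finset Ω) (X : Finset Ω) (ω : Ω) : Prop :=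
  ω ∈ X ∨ σ (X ∪ {ω}) ≠ {ω}

/-- `A ⪰*_σ B` iff either `A` is a singleton `{a}` with `a ≻_σ B`, or `B` is a singleton
`{b}` with `A ⪰_σ b`. -/
def geStar [DecidableEq Ω] (σ : Finset Ω → Finset Ω) (A B : Finset Ω) : Prop :=
  (∃ a, A = {a} ∧ succS σ a B) ∨ (∃ b, B = {b} ∧ succeqS σ A b)

/-- Two sequences of sets are balanced: every state occurs in exactly as many `A i`'s
as `B i`'s. -/
def BalancedSeq {n : ℕ} (A B : Fin n → Finset Ω) : Prop :=
  ∀ ω : Ω, Nat.card {i // ω ∈ A i} = Nat.card {i // ω ∈ B i}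

/-- `(A_i) ≤₀ (B_i)`: every state occurs in at most as many `A i`'s as `B i`'s. -/
def DomSeq {n : ℕ} (A B : Fin n → Finset Ω) : Prop :=
  ∀ ω : Ω, Nat.card {i // ω ∈ A i} ≤ Nat.card {i // ω ∈ B i}

/-- The (Scott) axiom for the induced order `⪰*_σ`. -/
def ScottAx [DecidableEq Ω] (σ : Finset Ω → Finset Ω) : Prop :=
  ∀ n : ℕ, ∀ A B : Fin (n + 1) → Finset Ω, BalancedSeq A B →
    (∀ i, geStar σ (A i) (B i)) → ∀ i, geStar σ (B i) (A i)

/-!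
For positive weights and `0 ≤ t < 1`, a nonempty `X ⊆ D` is `(μ_D, t)`-stable iff every single
`x ∈ X` satisfies `t * μ(D \ X) < (1 - t) * μ({x})`. For `t ≥ 1/2` a stable set therefore contains
every state of `D` at least as heavy as one of its own. Give one state `a` weight `t` and share
`1 - t` equally among the others. Every stable set contains the heaviest state `a`, and all or none
of the equally heavy other states; since `{a}` just fails to be stable in `Ω`, only `Ω` is stable.
Deleting any other state breaks the tie and makes `{a}` stable, so two different deletions `A` and
`B`, for which `A ∪ B = Ω`, refute the Or rule with `C = {a}`.
-/

section Stability

variable [DecidableEq Ω] {w : Ω → ℝ} {D X : Finset Ω} {t : ℝ} {a x y : Ω}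

theorem mea_sdiff_singleton (ha : a ∈ D) : mea w (D \ {a}) = mea w D - w a := by
  rw [mea, mea, sdiff_singleton_eq_erase, sum_erase_eq_sub ha]

theorem stableFor_condMea_iff (hD : 0 < mea w D) :
    StableFor (condMea w D) t X ↔ X.Nonempty ∧ ∀ E : Finset Ω, (X ∩ E).Nonempty →
      0 < mea w (D ∩ E) → t * mea w (D ∩ E) < mea w (D ∩ (X ∩ E)) := by
  refine and_congr_right fun _ => forall_congr' fun E => imp_congr_right fun _ => ?_
  unfold condMea
  rw [div_pos_iff_of_pos_right hD]
  refine imp_congr_right fun hE => ?_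
  rw [div_div_div_cancel_right₀ hD.ne', lt_div_iff₀ hE]

theorem StableFor.inter_nonempty (hX : StableFor (condMea w D) t X) (hD : 0 < mea w D)
    (ht : 0 ≤ t) : (D ∩ X).Nonempty := by
  obtain ⟨hne, hlt⟩ := (stableFor_condMea_iff hD).1 hX
  have key : t * mea w D < mea w (D ∩ X) := by
    have hXE : X ∩ (X ∪ D) = X := inter_eq_left.2 subset_union_left
    have hDE : D ∩ (X ∪ D) = D := inter_eq_left.2 subset_union_right
    simpa only [hXE, hDE, hD, hne, forall_const] using hlt (X ∪ D)
  by_contra hempty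
  rw [not_nonempty_iff_eq_empty.1 hempty, mea, mea, sum_empty] at key
  exact key.not_ge (mul_nonneg ht hD.le)

theorem StableFor.mul_mea_sdiff_lt (hX : StableFor (condMea w D) t X)
    (hw : ∀ ω ∈ D, 0 ≤ w ω) (hxD : x ∈ D) (hxX : x ∈ X) (hpos : 0 < w x + mea w (D \ X)) :
    t * mea w (D \ X) < (1 - t) * w x := by
  have hDE : D ∩ insert x (D \ X) = insert x (D \ X) :=
    inter_eq_right.2 (insert_subset hxD sdiff_subset)
  have hXE : D ∩ (X ∩ insert x (D \ X)) = {x} := by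
    rw [inter_insert_of_mem hxX, inter_sdiff_self, insert_empty_eq,
      inter_singleton_of_mem hxD]
  have hmea : mea w (insert x (D \ X)) = w x + mea w (D \ X) :=
    sum_insert (by simp [hxX])
  have hmea_x : mea w {x} = w x := sum_singleton w x
  have hD : 0 < mea w D :=
    (hmea ▸ hpos).trans_le <|
      sum_le_sum_of_subset_of_nonneg (insert_subset hxD sdiff_subset) fun ω hω _ => hw ω hω
  have key := ((stableFor_condMea_iff hD).1 hX).2 (insert x (D \ X))
    ⟨x, mem_inter.2 ⟨hxX, mem_insert_self _ _⟩⟩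
  rw [hDE, hXE, hmea, hmea_x] at key
  linarith [key hpos]

theorem stableFor_condMea_of_forall_mul_mea_sdiff_lt (hw : ∀ ω ∈ D, 0 ≤ w ω) (ht0 : 0 ≤ t)
    (ht1 : t ≤ 1) (hXD : X ⊆ D) (hne : X.Nonempty)
    (hlt : ∀ x ∈ X, t * mea w (D \ X) < (1 - t) * w x) : StableFor (condMea w D) t X := by
  have hout : 0 ≤ mea w (D \ X) := sum_nonneg fun ω hω => hw ω (sdiff_subset hω)
  have hD : 0 < mea w D := by
    obtain ⟨x, hx⟩ := hne
    have hwx : 0 < w x :=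
      pos_of_mul_pos_right ((mul_nonneg ht0 hout).trans_lt (hlt x hx)) (sub_nonneg.2 ht1)
    exact sum_pos' hw ⟨x, hXD hx, hwx⟩
  refine (stableFor_condMea_iff hD).2 ⟨hne, fun E ⟨x, hx⟩ _ => ?_⟩
  have hx_le : w x ≤ mea w (X ∩ E) :=
    single_le_sum (fun ω hω => hw ω (hXD (mem_inter.1 hω).1)) hx
  have hout_le : mea w ((D \ X) ∩ E) ≤ mea w (D \ X) :=
    sum_le_sum_of_subset_of_nonneg inter_subset_left fun ω hω _ => hw ω (sdiff_subset hω)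
  have hsplit : mea w (D ∩ E) = mea w (X ∩ E) + mea w ((D \ X) ∩ E) := by
    rw [mea, mea, mea, ← sum_union (disjoint_sdiff.mono inter_subset_left inter_subset_left),
      ← union_inter_distrib_right, union_sdiff_of_subset hXD]
  rw [← inter_assoc, inter_eq_right.2 hXD, hsplit]
  calc t * (mea w (X ∩ E) + mea w ((D \ X) ∩ E))
      ≤ t * mea w (X ∩ E) + t * mea w (D \ X) := by rw [mul_add]; gcongr
    _ < t * mea w (X ∩ E) + (1 - t) * w x := by grw [hlt x (mem_inter.1 hx).1]
    _ ≤ t * mea w (X ∩ E) + (1 - t) * mea w (X ∩ E) := by gcongr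
    _ = mea w (X ∩ E) := by ring

theorem StableFor.weight_lt_of_notMem (hX : StableFor (condMea w D) t X)
    (hw : ∀ ω ∈ D, 0 ≤ w ω) (ht : 1 / 2 ≤ t) (hxD : x ∈ D) (hxX : x ∈ X) (hyD : y ∈ D)
    (hyX : y ∉ X) (hpos : 0 < w x + w y) : w y < w x := by
  have hy_le : w y ≤ mea w (D \ X) :=
    single_le_sum (fun ω hω => hw ω (sdiff_subset hω)) (mem_sdiff.2 ⟨hyD, hyX⟩)
  have hlt : t * w y < t * w x := calc
    t * w y ≤ t * mea w (D \ X) := by gcongr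
    _ < (1 - t) * w x := hX.mul_mea_sdiff_lt hw hxD hxX (by linarith)
    _ ≤ t * w x := mul_le_mul_of_nonneg_right (by linarith) (hw x hxD)
  exact lt_of_mul_lt_mul_left hlt (by linarith)

theorem isLeastStable_singleton (hw : ∀ ω ∈ D, 0 ≤ w ω) (ht0 : 1 / 2 ≤ t) (ht1 : t ≤ 1)
    (ha : a ∈ D) (hlt : t * mea w (D \ {a}) < (1 - t) * w a) :
    IsLeastStable (condMea w D) t {a} := by
  have hstable : StableFor (condMea w D) t {a} :=
    stableFor_condMea_of_forall_mul_mea_sdiff_lt hw (by linarith) ht1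
      (singleton_subset_iff.2 ha) (singleton_nonempty a) (by simpa using hlt)
  have hout : 0 ≤ mea w (D \ {a}) := sum_nonneg fun ω hω => hw ω (sdiff_subset hω)
  have hwa : 0 < w a :=
    pos_of_mul_pos_right ((mul_nonneg (by linarith) hout).trans_lt hlt) (sub_nonneg.2 ht1)
  refine ⟨hstable, fun X hX => singleton_subset_iff.2 ?_⟩
  obtain ⟨x, hx⟩ := hX.inter_nonempty (sum_pos' hw ⟨a, ha, hwa⟩) (by linarith)
  obtain ⟨hxD, hxX⟩ := mem_inter.1 hx
  by_contra haX
  have hxa : x ∉ ({a} : Finset Ω) := fun h => haX (mem_singleton.1 h ▸ hxX)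
  have hlt_x : w a < w x :=
    hX.weight_lt_of_notMem hw ht0 hxD hxX ha haX (add_pos_of_nonneg_of_pos (hw x hxD) hwa)
  exact hlt_x.asymm <| hstable.weight_lt_of_notMem hw ht0 ha (mem_singleton_self a) hxD hxa
    (add_pos_of_pos_of_nonneg hwa (hw x hxD))

theorem isLeastStable_self_of_weight_eq_off {v : ℝ} (ht0 : 1 / 2 ≤ t) (ht1 : t < 1) (ha : a ∈ D)
    (hv : 0 < v) (hva : v ≤ w a) (hoff : ∀ ω ∈ D, ω ≠ a → w ω = v)
    (hle : (1 - t) * w a ≤ t * mea w (D \ {a})) : IsLeastStable (condMea w D) t D := by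
  have hv_le : ∀ ω ∈ D, v ≤ w ω := fun ω hω => by
    obtain rfl | hne := eq_or_ne ω a
    exacts [hva, (hoff ω hω hne).ge]
  have hpos : ∀ ω ∈ D, 0 < w ω := fun ω hω => hv.trans_le (hv_le ω hω)
  have hw : ∀ ω ∈ D, 0 ≤ w ω := fun ω hω => (hpos ω hω).le
  refine ⟨stableFor_condMea_of_forall_mul_mea_sdiff_lt hw (by linarith) ht1.le subset_rfl ⟨a, ha⟩
    fun x hx => ?_, fun X hX y hyD => ?_⟩
  · rw [Finset.sdiff_self, mea, sum_empty, mul_zero]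
    exact mul_pos (sub_pos.2 ht1) (hpos x hx)
  by_contra hyX
  have heq_a : ∀ x ∈ D ∩ X, x = a := fun x hx => by
    obtain ⟨hxD, hxX⟩ := mem_inter.1 hx
    by_contra hne
    have hlt : w y < w x :=
      hX.weight_lt_of_notMem hw ht0 hxD hxX hyD hyX (add_pos (hpos x hxD) (hpos y hyD))
    exact (hv_le y hyD).not_gt (hoff x hxD hne ▸ hlt)
  have hinter : D ∩ X = {a} :=
    eq_singleton_iff_nonempty_unique_mem.2
      ⟨hX.inter_nonempty (sum_pos hpos ⟨a, ha⟩) (by linarith), heq_a⟩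
  have haX : a ∈ X := (mem_inter.1 (hinter ▸ mem_singleton_self a)).2
  have hsdiff : D \ X = D \ {a} := by rw [← hinter, sdiff_inter_self_left]
  have hout : 0 ≤ mea w (D \ X) := sum_nonneg fun ω hω => hw ω (sdiff_subset hω)
  have hlt := hX.mul_mea_sdiff_lt hw ha haX (add_pos_of_pos_of_nonneg (hpos a ha) hout)
  exact hle.not_gt (hsdiff ▸ hlt)

end Stability

section PeakedWeight

variable [Fintype Ω] [DecidableEq Ω] {a b ω : Ω} {t : ℝ}

/-- The weight giving mass `t` to the state `a` and sharing `1 - t` equally among the other states: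
the measure on which the Or rule fails. On a one-point `Ω` the mass `1 - t` is lost. -/
noncomputable def peakedWeight (a : Ω) (t : ℝ) (ω : Ω) : ℝ :=
  if ω = a then t else (1 - t) / (Fintype.card Ω - 1)

theorem peakedWeight_self : peakedWeight a t a = t := if_pos rfl

theorem peakedWeight_of_ne (h : ω ≠ a) :
    peakedWeight a t ω = (1 - t) / (Fintype.card Ω - 1) := if_neg h

theorem peakedWeight_pos (ht0 : 0 < t) (ht1 : t < 1) (ω : Ω) : 0 < peakedWeight a t ω := by
  obtain rfl | hne := eq_or_ne ω a
  · rwa [peakedWeight_self]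
  · have hcard : (1 : ℝ) < Fintype.card Ω :=
      Nat.one_lt_cast.2 (Fintype.one_lt_card_iff.2 ⟨ω, a, hne⟩)
    rw [peakedWeight_of_ne hne]
    exact div_pos (sub_pos.2 ht1) (sub_pos.2 hcard)

theorem mea_peakedWeight_univ [Nontrivial Ω] : mea (peakedWeight a t) univ = 1 := by
  have hcard : (1 : ℝ) < Fintype.card Ω := Nat.one_lt_cast.2 Fintype.one_lt_card
  have hoff : ∑ ω ∈ univ.erase a, peakedWeight a t ω = 1 - t := by
    rw [sum_congr rfl fun ω hω => peakedWeight_of_ne (ne_of_mem_erase hω), sum_const,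
      card_erase_of_mem (mem_univ a), card_univ, nsmul_eq_mul,
      Nat.cast_pred Fintype.card_pos, mul_div_cancel₀ _ (sub_pos.2 hcard).ne']
  rw [mea, ← add_sum_erase univ _ (mem_univ a), peakedWeight_self, hoff, add_sub_cancel]

theorem isLeastStable_peakedWeight_sdiff_singleton (ht0 : 1 / 2 ≤ t) (ht1 : t < 1)
    (hab : a ≠ b) : IsLeastStable (condMea (peakedWeight a t) (univ \ {b})) t {a} := by
  have : Nontrivial Ω := ⟨a, b, hab⟩
  have ht : 0 < t := by linarith
  have ha : a ∈ univ \ {b} := by simpa using hab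
  refine isLeastStable_singleton (fun ω _ => (peakedWeight_pos ht ht1 ω).le) ht0 ht1.le ha ?_
  rw [mea_sdiff_singleton ha, mea_sdiff_singleton (mem_univ b), mea_peakedWeight_univ,
    peakedWeight_self, mul_comm]
  gcongr
  linarith [peakedWeight_pos (a := a) ht ht1 b]

theorem isLeastStable_peakedWeight_univ [Nontrivial Ω] (ht0 : 1 / 2 ≤ t) (ht1 : t < 1) :
    IsLeastStable (condMea (peakedWeight a t) univ) t univ := by
  have hcard : (2 : ℝ) ≤ Fintype.card Ω := Nat.ofNat_le_cast.2 Fintype.one_lt_card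
  refine isLeastStable_self_of_weight_eq_off (v := (1 - t) / (Fintype.card Ω - 1)) ht0 ht1
    (mem_univ a) (div_pos (by linarith) (by linarith)) ?_
    (fun ω _ hne => peakedWeight_of_ne hne) ?_
  · rw [peakedWeight_self, div_le_iff₀ (by linarith)]
    nlinarith
  · rw [mea_sdiff_singleton (mem_univ a), mea_peakedWeight_univ, peakedWeight_self, mul_comm]

end PeakedWeight

/-- failure of the Or rule, Observation `failure of Or`: on every finite set
with at least 3 elements and for every threshold `t ∈ [1/2, 1)`, there is a probability
measure and sets witnessing a failure of the Or rule for probabilistically stable revision. -/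
theorem stmt6 (Ω : Type*) [Fintype Ω] [DecidableEq Ω] (hcard : 3 ≤ Fintype.card Ω)
    (t : ℝ) (ht0 : 1 / 2 ≤ t) (ht1 : t < 1) :
    ∃ (w : Ω → ℝ) (A B C SA SB SAB : Finset Ω),
      IsProbWeight w ∧
      0 < mea w A ∧ 0 < mea w B ∧ 0 < mea w (A ∪ B) ∧
      IsLeastStable (condMea w A) t SA ∧
      IsLeastStable (condMea w B) t SB ∧
      IsLeastStable (condMea w (A ∪ B)) t SAB ∧
      SA ⊆ C ∧ SB ⊆ C ∧ ¬ SAB ⊆ C := by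
  obtain ⟨a, b, c, hab, hac, hbc⟩ := Fintype.two_lt_card_iff.1 hcard
  have : Nontrivial Ω := ⟨a, b, hab⟩
  have hpos : ∀ ω, 0 < peakedWeight a t ω := peakedWeight_pos (by linarith) ht1
  have hmea : ∀ D : Finset Ω, a ∈ D → 0 < mea (peakedWeight a t) D :=
    fun D ha => sum_pos (fun ω _ => hpos ω) ⟨a, ha⟩
  have hunion : (univ \ {b} ∪ univ \ {c} : Finset Ω) = univ := by
    rw [← sdiff_inter_distrib_right, singleton_inter_of_notMem (by simpa using hbc), sdiff_empty]
  refine ⟨peakedWeight a t, univ \ {b}, univ \ {c}, {a}, {a}, {a}, univ,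
    ⟨fun ω => (hpos ω).le, mea_peakedWeight_univ⟩, hmea _ (by simpa using hab),
    hmea _ (by simpa using hac), ?_, isLeastStable_peakedWeight_sdiff_singleton ht0 ht1 hab,
    isLeastStable_peakedWeight_sdiff_singleton ht0 ht1 hac, ?_, subset_rfl, subset_rfl, ?_⟩
  · rw [hunion]
    exact hmea univ (mem_univ a)
  · rw [hunion]
    exact isLeastStable_peakedWeight_univ ht0 ht1
  · exact fun hsub => hab.symm (mem_singleton.1 (hsub (mem_univ b)))
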